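/- Let m ∈ ℝ, let λ ∈ ℂ, and let p : ℝ → ℝ be twice differentiable at a point y ∈ ℝ. Define the 2×2 complex matrices A^FN(λ;y) = [[-6iλ² - 3i p(y)² - i y, 6 p(y) λ + 3i p'(y) + m λ⁻¹], [6 p(y) λ - 3i p'(y) + m λ⁻¹, 6iλ² + 3i p(y)² + i y]] and B^FN(λ;y) = [[-iλ, p(y)], [p(y), iλ]]. Then for λ ≠ 0, the zero-curvature (compatibility) equation ∂A^FN/∂y - ∂B^FN/∂λ + [A^FN, B^FN] = 0 holds at (λ, y) if and only if p satisfies the Painlevé-II equation p''(y) - 2 p(y)³ - (2/3) y p(y) + (2/3) m = 0 at y. -/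

import Mathlib

open Complex Matrix

/-- The Flaschka–Newell matrix `A^FN(λ; y)` for a function `p` and parameter `m`. -/
noncomputable def AFN (m : ℝ) (p : ℝ → ℝ) (l : ℂ) (y : ℝ) : Matrix (Fin 2) (Fin 2) ℂ :=
  !![-6 * I * l ^ 2 - 3 * I * (p y : ℂ) ^ 2 - I * (y : ℂ),
      6 * (p y : ℂ) * l + 3 * I * (Complex.ofReal (deriv p y)) + (m : ℂ) * l⁻¹;
     6 * (p y : ℂ) * l - 3 * I * (Complex.ofReal (deriv p y)) + (m : ℂ) * l⁻¹,
      6 * I * l ^ 2 + 3 * I * (p y : ℂ) ^ 2 + I * (y : ℂ)]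

/-- The Flaschka–Newell matrix `B^FN(λ; y)` for a function `p`. -/
noncomputable def BFN (p : ℝ → ℝ) (l : ℂ) (y : ℝ) : Matrix (Fin 2) (Fin 2) ℂ :=
  !![-I * l, (p y : ℂ); (p y : ℂ), I * l]

/-- For `λ ≠ 0`, the zero-curvature equation
`∂A^FN/∂y - ∂B^FN/∂λ + [A^FN, B^FN] = 0` holds at `(λ, y)` if and only if
`p` satisfies the Painlevé-II equation at `y`. -/
theorem zero_curvature_iff_painleveII (m : ℝ) (l : ℂ) (p : ℝ → ℝ) (y : ℝ)
    (hl : l ≠ 0)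
    (h1 : DifferentiableAt ℝ p y)
    (h2 : DifferentiableAt ℝ (deriv p) y) :
    ((Matrix.of fun i j => deriv (fun t : ℝ => AFN m p l t i j) y) -
        (Matrix.of fun i j => deriv (fun z : ℂ => BFN p z y i j) l) +
        (AFN m p l y * BFN p l y - BFN p l y * AFN m p l y) = 0) ↔
      deriv (deriv p) y - 2 * (p y) ^ 3 - (2 / 3) * y * p y + (2 / 3) * m = 0 := by
  have hp : HasDerivAt (fun t : ℝ => (p t : ℂ)) (deriv p y : ℝ) y := h1.hasDerivAt.ofReal_comp
  have hq : HasDerivAt (fun t : ℝ => ((deriv p t : ℝ) : ℂ)) (deriv (deriv p) y : ℝ) y :=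
    h2.hasDerivAt.ofReal_comp
  have hy : HasDerivAt (fun t : ℝ => (t : ℂ)) 1 y := by
    simpa using (hasDerivAt_id y).ofReal_comp
  have a00 : deriv (fun t : ℝ => AFN m p l t 0 0) y
      = -6 * I * (p y : ℂ) * (deriv p y : ℝ) - I := by
    have h := (((hp.pow 2).const_mul (3 * I)).const_sub (-6 * I * l ^ 2)).sub (hy.const_mul I)
    refine Eq.trans (HasDerivAt.deriv h) ?_
    push_cast
    ring
  have a11 : deriv (fun t : ℝ => AFN m p l t 1 1) y
      = 6 * I * (p y : ℂ) * (deriv p y : ℝ) + I := by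
    have h := (((hp.pow 2).const_mul (3 * I)).const_add (6 * I * l ^ 2)).add (hy.const_mul I)
    refine Eq.trans (HasDerivAt.deriv h) ?_
    push_cast
    ring
  have a01 : deriv (fun t : ℝ => AFN m p l t 0 1) y
      = 6 * (deriv p y : ℝ) * l + 3 * I * (deriv (deriv p) y : ℝ) := by
    have h := (((hp.const_mul 6).mul_const l).add (hq.const_mul (3 * I))).add_const ((m : ℂ) * l⁻¹)
    exact HasDerivAt.deriv h
  have a10 : deriv (fun t : ℝ => AFN m p l t 1 0) y
      = 6 * (deriv p y : ℝ) * l - 3 * I * (deriv (deriv p) y : ℝ) := by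
    have h := (((hp.const_mul 6).mul_const l).sub (hq.const_mul (3 * I))).add_const ((m : ℂ) * l⁻¹)
    exact HasDerivAt.deriv h
  have b00 : deriv (fun z : ℂ => BFN p z y 0 0) l = -I := by
    have h := (hasDerivAt_id l).const_mul (-I)
    exact (HasDerivAt.deriv h).trans (mul_one _)
  have b11 : deriv (fun z : ℂ => BFN p z y 1 1) l = I := by
    have h := (hasDerivAt_id l).const_mul I
    exact (HasDerivAt.deriv h).trans (mul_one _)
  have b01 : deriv (fun z : ℂ => BFN p z y 0 1) l = 0 := deriv_const l (p y : ℂ)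
  have b10 : deriv (fun z : ℂ => BFN p z y 1 0) l = 0 := deriv_const l (p y : ℂ)
  have hll : l * l⁻¹ = 1 := mul_inv_cancel₀ hl
  set E : ℝ := deriv (deriv p) y - 2 * (p y) ^ 3 - (2 / 3) * y * p y + (2 / 3) * m with hE
  have hEc : (E : ℂ) = (deriv (deriv p) y : ℝ) - 2 * (p y : ℂ) ^ 3 - (2 / 3) * y * p y
      + (2 / 3) * m := by
    rw [hE]; push_cast; ring
  have key : ((Matrix.of fun i j => deriv (fun t : ℝ => AFN m p l t i j) y) -
        (Matrix.of fun i j => deriv (fun z : ℂ => BFN p z y i j) l) +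
        (AFN m p l y * BFN p l y - BFN p l y * AFN m p l y))
      = !![0, 3 * I * (E : ℂ); -(3 * I * (E : ℂ)), 0] := by
    ext i j
    fin_cases i <;> fin_cases j <;>
      simp only [Matrix.add_apply, Matrix.sub_apply, Matrix.of_apply, Matrix.mul_apply,
        Fin.sum_univ_two, Fin.zero_eta, Fin.mk_one, a00, a01, a10, a11, b00, b01, b10, b11, hEc] <;>
      simp [AFN, BFN]
    · ring
    · linear_combination (2 * I * m) * hll + 6 * (deriv p y : ℝ) * l * I_sq
    · linear_combination (-2 * I * m) * hll + 6 * (deriv p y : ℝ) * l * I_sq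
    · ring
  rw [key]
  constructor
  · intro h
    have h01 := congrFun (congrFun h 0) 1
    simpa using h01
  · intro h
    rw [h]
    ext i j
    fin_cases i <;> fin_cases j <;> simp
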